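/- Let D_S be a bounded free simplex in g variables and let X ∈ D_S(2) be a tuple of real symmetric 2×2 matrices that is a Euclidean extreme point of D_S(2) and such that some X_j is not a real scalar multiple of I_2. If (H, W_1,…,W_g) is a tuple of 2×2 complex Hermitian matrices satisfying ker L_S(X) ⊆ ker Λ_{(I,−S)}(H, W), then all entries of H are real. -/

import Mathlib

open Matrix
open scoped Kronecker ComplexOrder

/-- Membership in the level of the free spectrahedron determined by the Hermitian tuple `A`,
at matrix size given by the index type `m`: all coordinates are Hermitian and
`I − Σ_i A_i ⊗ X_i ⪰ 0`. -/
def memD {ι : Type*} [Fintype ι] {d : Type*} [Fintype d] [DecidableEq d]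
    {m : Type*} [Fintype m] [DecidableEq m]
    (A : ι → Matrix d d ℂ) (X : ι → Matrix m m ℂ) : Prop :=
  (∀ i, (X i).IsHermitian) ∧
    ((1 : Matrix (d × m) (d × m) ℂ) - ∑ i, A i ⊗ₖ X i).PosSemidef

/-- Boundedness of a free spectrahedron: every level is a bounded set. -/
def BoundedD {ι : Type*} [Fintype ι] {d : Type*} [Fintype d] [DecidableEq d]
    (A : ι → Matrix d d ℂ) : Prop :=
  ∀ n : ℕ, ∃ C : ℝ, ∀ X : ι → Matrix (Fin n) (Fin n) ℂ,
    memD A X → ∀ i p q, ‖X i p q‖ ≤ C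

/-- The real-diagonal defining tuple of a free simplex in `g` variables, determined by the
diagonal entries `σ j : Fin (g+1) → ℝ`. -/
noncomputable def simplexPencil {g : ℕ} (σ : Fin g → Fin (g + 1) → ℝ) :
    Fin g → Matrix (Fin (g + 1)) (Fin (g + 1)) ℂ :=
  fun j => Matrix.diagonal fun p => ((σ j p : ℝ) : ℂ)

/-!
`L_S(X)` is the direct sum of the facet slacks `I − ∑ j, s j p • X j`, one for each facet `p`.

Suppose one facet slack of an extreme point `X` of a bounded free simplex is nonsingular, hence
positive definite. The remaining `g` facets are linearly independent, so each of their slacks can be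
rescaled on its own, the positive definite one absorbing the change. Extremality forces all these
slacks to vanish, and then every `X j` is scalar, which is excluded.

So every facet slack of `X` is singular. As `X` is real, each has a real kernel vector, which the
corresponding slack `H − ∑ j, s j p • W j` of `(H, W)` kills too. The imaginary part of a Hermitian
2×2 matrix is skew-symmetric, so it vanishes once it kills a nonzero real vector; hence
`Im H = ∑ j, s j p • Im W j` for every facet `p`. If some entry of `Im H` were nonzero, the same
entry of the `Im W j` would give, up to sign, a recession direction of a bounded polytope.
-/

open Filter Topology

section Generalities

theorem eq_zero_of_mem_extremePoints_of_eventually_add_smul_mem {E : Type*} [AddCommGroup E]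
    [Module ℝ E] {A : Set E} {x y : E} (hx : x ∈ A.extremePoints ℝ)
    (hy : ∀ᶠ t : ℝ in 𝓝 0, x + t • y ∈ A) : y = 0 := by
  have hneg : ∀ᶠ t : ℝ in 𝓝 0, x - t • y ∈ A := by
    simpa [sub_eq_add_neg] using (continuous_neg.tendsto' (0 : ℝ) 0 neg_zero).eventually hy
  obtain ⟨t, ht, hadd, hsub⟩ :=
    ((frequently_gt_nhds (0 : ℝ)).and_eventually (hy.and hneg)).exists
  have hty : x + t • y = x := hx.2 hadd hsub (mem_openSegment_add_sub x (t • y))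
  exact (smul_eq_zero.mp (add_eq_left.mp hty)).resolve_left ht.ne'

open scoped MatrixOrder Matrix.Norms.L2Operator in
theorem eventually_posSemidef_add_smul {n : Type*} [Finite n] {P N : Matrix n n ℂ}
    (hP : P.PosDef) (hN : N.IsHermitian) : ∀ᶠ t : ℝ in 𝓝 0, (P + t • N).PosSemidef := by
  classical
  have := Fintype.ofFinite n
  obtain _ | _ := subsingleton_or_nontrivial (Matrix n n ℂ)
  · exact .of_forall fun t => Subsingleton.elim 0 (P + t • N) ▸ .zero
  obtain ⟨r, hr, hrP⟩ : ∃ r > 0, algebraMap ℝ (Matrix n n ℂ) r ≤ P :=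
    (CFC.exists_pos_algebraMap_le_iff hP.isHermitian).mpr fun x hx =>
      hP.isStrictlyPositive.spectrum_pos hx
  have hsmall : ∀ᶠ t : ℝ in 𝓝 0, ‖t • N‖ < r :=
    ((continuous_id.smul continuous_const).norm.tendsto' (0 : ℝ) 0 (by simp)).eventually
      (gt_mem_nhds hr)
  filter_upwards [hsmall] with t ht
  have htN : IsSelfAdjoint (t • N) := hN.smul (.all t)
  have hneg : -(t • N) ≤ P :=
    calc -(t • N) ≤ algebraMap ℝ _ ‖t • N‖ := neg_le.mp htN.neg_algebraMap_norm_le_self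
      _ ≤ algebraMap ℝ _ r := algebraMap_mono _ ht.le
      _ ≤ P := hrP
  exact Matrix.nonneg_iff_posSemidef.mp (neg_le_iff_add_nonneg.mp hneg)

theorem blockDiagonal_mulVec {m n o R : Type*} [Fintype n] [Fintype o] [DecidableEq o]
    [NonUnitalNonAssocSemiring R] (M : o → Matrix m n R) (v : n × o → R) (a : m) (p : o) :
    (blockDiagonal M *ᵥ v) (a, p) = (M p *ᵥ fun b => v (b, p)) a := by
  simp [mulVec, dotProduct, blockDiagonal_apply, Fintype.sum_prod_type]

theorem posSemidef_blockDiagonal_iff {m o R : Type*} [Finite m] [Finite o] [DecidableEq o]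
    [Ring R] [PartialOrder R] [StarRing R] [AddLeftMono R] {M : o → Matrix m m R} :
    (blockDiagonal M).PosSemidef ↔ ∀ p, (M p).PosSemidef := by
  have := Fintype.ofFinite m
  have := Fintype.ofFinite o
  refine ⟨fun h p => ?_, fun h => .of_dotProduct_mulVec_nonneg
    (isHermitian_blockDiagonal_iff.mpr fun p => (h p).isHermitian) fun v => ?_⟩
  · have hsub : (blockDiagonal M).submatrix (·, p) (·, p) = M p := by
      ext a b
      exact blockDiagonal_apply_eq M a b p
    exact hsub ▸ h.submatrix _
  · have hquad : star v ⬝ᵥ (blockDiagonal M *ᵥ v) =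
        ∑ p, star (fun a => v (a, p)) ⬝ᵥ (M p *ᵥ fun a => v (a, p)) := by
      simp only [dotProduct, Fintype.sum_prod_type_right, blockDiagonal_mulVec, Pi.star_apply]
    exact hquad ▸ Finset.sum_nonneg fun p _ => (h p).dotProduct_mulVec_nonneg _

theorem eq_zero_of_transpose_eq_neg_of_det_eq_zero {R : Type*} [CommRing R] [IsReduced R]
    [IsAddTorsionFree R] {A : Matrix (Fin 2) (Fin 2) R} (hA : Aᵀ = -A) (hdet : A.det = 0) :
    A = 0 := by
  have hdiag (i : Fin 2) : A i i = 0 := self_eq_neg.mp (congrFun₂ hA i i)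
  have hoff : A 1 0 = -A 0 1 := congrFun₂ hA 0 1
  have hsq : A 0 1 ^ 2 = 0 := by
    rw [det_fin_two, hdiag, hoff] at hdet
    linear_combination hdet
  have hzero : A 0 1 = 0 := eq_zero_of_pow_eq_zero hsq
  ext i j
  fin_cases i <;> fin_cases j <;> simp [hdiag, hoff, hzero]

theorem map_im_mulVec {m n : Type*} [Fintype n] (M : Matrix m n ℂ) (w : n → ℝ) :
    M.map Complex.im *ᵥ w = fun a => ((M *ᵥ fun b => (w b : ℂ)) a).im := by
  ext a
  simp [mulVec, dotProduct]

theorem exists_ofReal_mulVec_eq_zero {n : Type*} [Fintype n] [DecidableEq n]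
    {M : Matrix n n ℂ} (hM : M.map Complex.im = 0) (hdet : M.det = 0) :
    ∃ w : n → ℝ, w ≠ 0 ∧ M *ᵥ (fun a => (w a : ℂ)) = 0 := by
  have hre : M = (M.map Complex.re).map Complex.ofRealHom := by
    ext a b
    exact Complex.ext rfl (congrFun₂ hM a b)
  have hdet' : (M.map Complex.re).det = 0 := by
    rw [hre, ← RingHom.mapMatrix_apply, ← RingHom.map_det] at hdet
    exact Complex.ofReal_eq_zero.mp hdet
  obtain ⟨w, hw, hMw⟩ := exists_mulVec_eq_zero_iff.mpr hdet'
  refine ⟨w, hw, ?_⟩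
  ext a
  rw [hre]
  exact (RingHom.map_mulVec Complex.ofRealHom _ w a).symm.trans (by simp [hMw])

theorem map_im_eq_zero_of_isHermitian_of_mulVec_eq_zero {K : Matrix (Fin 2) (Fin 2) ℂ}
    (hK : K.IsHermitian) {w : Fin 2 → ℝ} (hw : w ≠ 0) (hKw : K *ᵥ (fun a => (w a : ℂ)) = 0) :
    K.map Complex.im = 0 := by
  have hskew : (K.map Complex.im)ᵀ = -K.map Complex.im := by
    ext a b
    simpa using congrArg Complex.im (hK.apply b a).symm
  have hker : K.map Complex.im *ᵥ w = 0 := by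
    simp only [map_im_mulVec, hKw, Pi.zero_apply, Complex.zero_im]
    rfl
  exact eq_zero_of_transpose_eq_neg_of_det_eq_zero hskew
    (exists_mulVec_eq_zero_iff.mp ⟨w, hw, hker⟩)

end Generalities

section Slack

variable {ι d V V' : Type*} [Fintype ι] [AddCommGroup V] [Module ℝ V] [AddCommGroup V']
  [Module ℝ V']

/-- The slack of `w` in the facet `p` of the polytope `{w | ∀ p, ∑ j, s j p * w j ≤ h}`, for `h` and
`w` with values in a real vector space. Matrix-valued slacks are the diagonal blocks of
`Λ_{(I,−S)}(h, w)`, and those with `h = 1` are the blocks of `L_S(w)`. -/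
def facetSlack (s : ι → d → ℝ) (h : V) (w : ι → V) (p : d) : V :=
  h - ∑ j, s j p • w j

theorem map_facetSlack (f : V →ₗ[ℝ] V') (s : ι → d → ℝ) (h : V) (w : ι → V) (p : d) :
    f (facetSlack s h w p) = facetSlack s (f h) (fun j => f (w j)) p := by
  simp [facetSlack]

theorem facetSlack_smul_const (s : ι → d → ℝ) (c : ℝ) (y : ι → ℝ) (v : V) (p : d) :
    facetSlack s (c • v) (fun j => y j • v) p = facetSlack s c y p • v :=
  (map_facetSlack (LinearMap.toSpanSingleton ℝ V v) s c y p).symm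

theorem facetSlack_sub (s : ι → d → ℝ) (h h' : V) (w w' : ι → V) (p : d) :
    facetSlack s (h - h') (w - w') p = facetSlack s h w p - facetSlack s h' w' p := by
  simp only [facetSlack, Pi.sub_apply, smul_sub, Finset.sum_sub_distrib]
  abel

theorem facetSlack_add_smul (s : ι → d → ℝ) (h : V) (w u : ι → V) (t : ℝ) (p : d) :
    facetSlack s h (w + t • u) p = facetSlack s h w p + t • facetSlack s 0 u p := by
  simp only [facetSlack, Pi.add_apply, Pi.smul_apply, smul_add, Finset.sum_add_distrib,
    smul_comm _ t, ← Finset.smul_sum]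
  module

theorem isHermitian_facetSlack {m : Type*} (s : ι → d → ℝ) {H : Matrix m m ℂ}
    {W : ι → Matrix m m ℂ} (hH : H.IsHermitian) (hW : ∀ j, (W j).IsHermitian) (p : d) :
    (facetSlack s H W p).IsHermitian :=
  hH.sub (isSelfAdjoint_sum _ fun j _ => (hW j).smul (.all (s j p)))

theorem map_im_facetSlack {m n : Type*} (s : ι → d → ℝ) (H : Matrix m n ℂ)
    (W : ι → Matrix m n ℂ) (p : d) :
    (facetSlack s H W p).map Complex.im =
      facetSlack s (H.map Complex.im) (fun j => (W j).map Complex.im) p :=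
  map_facetSlack Complex.imLm.mapMatrix s H W p

end Slack

section Pencil

variable {ι d m : Type*} [Fintype ι] [DecidableEq d]

/-- The real diagonal matrices with diagonals `s j`: the defining tuple of a free polytope with
facets `d`. For `ι = Fin g` and `d = Fin (g + 1)` this is `simplexPencil s`, definitionally. -/
def polytopePencil (s : ι → d → ℝ) : ι → Matrix d d ℂ :=
  fun j => diagonal fun p => (s j p : ℂ)

theorem one_kronecker_sub_sum_polytopePencil_kronecker (s : ι → d → ℝ) (H : Matrix m m ℂ)
    (W : ι → Matrix m m ℂ) :
    (1 : Matrix d d ℂ) ⊗ₖ H - ∑ j, polytopePencil s j ⊗ₖ W j =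
      reindex (Equiv.prodComm m d) (Equiv.prodComm m d) (blockDiagonal (facetSlack s H W)) := by
  ext ⟨p, a⟩ ⟨q, b⟩
  obtain rfl | hpq := eq_or_ne p q
  · simp [polytopePencil, facetSlack, Matrix.sum_apply]
  · simp [polytopePencil, Matrix.sum_apply, blockDiagonal_apply, hpq]

variable [Fintype d] [Fintype m]

theorem polytopePencil_mulVec (s : ι → d → ℝ) (H : Matrix m m ℂ) (W : ι → Matrix m m ℂ)
    (v : d × m → ℂ) (p : d) (a : m) :
    (((1 : Matrix d d ℂ) ⊗ₖ H - ∑ j, polytopePencil s j ⊗ₖ W j) *ᵥ v) (p, a) =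
      (facetSlack s H W p *ᵥ fun b => v (p, b)) a := by
  rw [one_kronecker_sub_sum_polytopePencil_kronecker, reindex_apply, submatrix_mulVec_equiv]
  exact blockDiagonal_mulVec _ _ a p

variable [DecidableEq m]

theorem memD_polytopePencil_iff {s : ι → d → ℝ} {X : ι → Matrix m m ℂ} :
    memD (polytopePencil s) X ↔
      (∀ j, (X j).IsHermitian) ∧ ∀ p, (facetSlack s 1 X p).PosSemidef := by
  rw [memD, ← one_kronecker_one, one_kronecker_sub_sum_polytopePencil_kronecker, reindex_apply,
    posSemidef_submatrix_equiv, posSemidef_blockDiagonal_iff]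

theorem eventually_memD_add_smul {s : ι → d → ℝ} {X Y : ι → Matrix m m ℂ}
    (hX : ∀ j, (X j).IsHermitian) (hY : ∀ j, (Y j).IsHermitian)
    (hXY : ∀ p, ∀ᶠ t : ℝ in 𝓝 0, (facetSlack s 1 X p + t • facetSlack s 0 Y p).PosSemidef) :
    ∀ᶠ t : ℝ in 𝓝 0, memD (polytopePencil s) (X + t • Y) := by
  filter_upwards [eventually_all.mpr hXY] with t ht
  refine memD_polytopePencil_iff.mpr ⟨fun j => (hX j).add ((hY j).smul (.all t)), fun p => ?_⟩
  exact (facetSlack_add_smul s 1 X Y t p).symm ▸ ht p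

theorem facetSlack_mulVec_eq_zero_of_forall_mulVec_eq_zero {s : ι → d → ℝ}
    {H : Matrix m m ℂ} {X W : ι → Matrix m m ℂ}
    (hker : ∀ v : d × m → ℂ,
      ((1 : Matrix (d × m) (d × m) ℂ) - ∑ j, polytopePencil s j ⊗ₖ X j) *ᵥ v = 0 →
        ((1 : Matrix d d ℂ) ⊗ₖ H - ∑ j, polytopePencil s j ⊗ₖ W j) *ᵥ v = 0)
    {p : d} {w : m → ℂ} (hw : facetSlack s 1 X p *ᵥ w = 0) : facetSlack s H W p *ᵥ w = 0 := by
  let v : d × m → ℂ := fun r => (Pi.single p w : d → m → ℂ) r.1 r.2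
  have hv : ((1 : Matrix (d × m) (d × m) ℂ) - ∑ j, polytopePencil s j ⊗ₖ X j) *ᵥ v = 0 := by
    ext ⟨q, a⟩
    rw [← one_kronecker_one, polytopePencil_mulVec]
    change (facetSlack s 1 X q *ᵥ (Pi.single p w : d → m → ℂ) q) a = 0
    obtain rfl | hq := eq_or_ne q p
    · simp [hw]
    · simp [hq]
  ext a
  simpa [polytopePencil_mulVec, v] using congrFun (hker v hv) (p, a)

end Pencil

section Bounded

variable {ι d V : Type*} [Fintype ι] [Fintype d] [DecidableEq d] [AddCommGroup V] [Module ℝ V]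
  {s : ι → d → ℝ}

theorem eq_zero_of_forall_facetSlack_zero_nonneg (hbdd : BoundedD (polytopePencil s))
    {b : ι → ℝ} (hb : ∀ p, 0 ≤ facetSlack s 0 b p) : b = 0 := by
  obtain ⟨C, hC⟩ := hbdd 1
  let X (t : ℝ) (j : ι) : Matrix (Fin 1) (Fin 1) ℂ := (t * b j) • 1
  have hray (t : ℝ) (ht : 0 ≤ t) : memD (polytopePencil s) (X t) := by
    refine memD_polytopePencil_iff.mpr ⟨fun j => isHermitian_one.smul (.all _), fun p => ?_⟩
    have hslack : facetSlack s 1 (X t) p = (1 + t * facetSlack s 0 b p) • 1 := by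
      have hreal : facetSlack s 1 (t • b) p = 1 + t * facetSlack s 0 b p := by
        simpa [facetSlack] using facetSlack_add_smul s 1 0 b t p
      rw [← hreal, ← facetSlack_smul_const, one_smul]
      rfl
    exact hslack ▸ PosSemidef.one.smul (add_nonneg zero_le_one (mul_nonneg ht (hb p)))
  ext j
  by_contra hj
  have hbound (t : ℝ) (ht : 0 ≤ t) : t * |b j| ≤ C := by
    simpa [X, abs_of_nonneg ht] using hC (X t) (hray t ht) j 0 0
  obtain ⟨t, ht, htC⟩ := ((eventually_ge_atTop 0).and
    ((tendsto_id.atTop_mul_const (abs_pos.mpr hj)).eventually_gt_atTop C)).exists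
  exact (hbound t ht).not_gt htC

theorem eq_zero_of_forall_facetSlack_zero_nonpos (hbdd : BoundedD (polytopePencil s))
    {b : ι → ℝ} (hb : ∀ p, facetSlack s 0 b p ≤ 0) : b = 0 := by
  refine neg_eq_zero.mp (eq_zero_of_forall_facetSlack_zero_nonneg hbdd fun p => ?_)
  simpa [facetSlack] using hb p

theorem eq_zero_of_forall_ne_facetSlack_zero_eq_zero (hbdd : BoundedD (polytopePencil s)) (p : d)
    {w : ι → V} (hw : ∀ q ≠ p, facetSlack s 0 w q = 0) : w = 0 := by
  ext j
  refine (Module.forall_dual_apply_eq_zero_iff ℝ (w j)).mp fun φ => ?_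
  have hφ (q : d) (hq : q ≠ p) : facetSlack s 0 (fun j => φ (w j)) q = 0 := by
    simpa [hw q hq] using (map_facetSlack φ s 0 w q).symm
  refine congrFun (?_ : (fun j => φ (w j)) = 0) j
  obtain hp | hp := le_total 0 (facetSlack s 0 (fun j => φ (w j)) p)
  · refine eq_zero_of_forall_facetSlack_zero_nonneg hbdd fun q => ?_
    obtain rfl | hq := eq_or_ne q p
    exacts [hp, (hφ q hq).ge]
  · refine eq_zero_of_forall_facetSlack_zero_nonpos hbdd fun q => ?_
    obtain rfl | hq := eq_or_ne q p
    exacts [hp, (hφ q hq).le]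

theorem eq_zero_of_forall_facetSlack_eq_zero [Nonempty d] (hbdd : BoundedD (polytopePencil s))
    {h : V} {w : ι → V} (hw : ∀ p, facetSlack s h w p = 0) : h = 0 := by
  refine (Module.forall_dual_apply_eq_zero_iff ℝ h).mp fun φ => ?_
  let b (j : ι) : ℝ := φ (w j)
  have hsum (p : d) : φ h + facetSlack s 0 b p = 0 := by
    have hφ : facetSlack s (φ h) b p = 0 := by rw [← map_facetSlack, hw, map_zero]
    simp only [facetSlack] at hφ ⊢
    linarith
  have hb : b = 0 := by
    obtain hle | hge := le_total (φ h) 0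
    · exact eq_zero_of_forall_facetSlack_zero_nonneg hbdd fun p => by linarith [hsum p]
    · exact eq_zero_of_forall_facetSlack_zero_nonpos hbdd fun p => by linarith [hsum p]
  simpa [hb, facetSlack] using hsum (Classical.arbitrary d)

end Bounded

section Simplex

variable {ι d m : Type*} [Fintype ι] [Fintype d] [DecidableEq d] {s : ι → d → ℝ}

theorem exists_forall_ne_facetSlack_eq (hcard : Fintype.card d = Fintype.card ι + 1)
    (hbdd : BoundedD (polytopePencil s)) (p : d) (h : ℝ) (c : d → ℝ) :
    ∃ y : ι → ℝ, ∀ q ≠ p, facetSlack s h y q = c q := by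
  let T : (ι → ℝ) →ₗ[ℝ] {q // q ≠ p} → ℝ := (of fun (q : {q // q ≠ p}) j => s j q).mulVecLin
  have hT (y : ι → ℝ) (q : {q // q ≠ p}) : T y q = ∑ j, s j q * y j := rfl
  have hinj : Function.Injective T := by
    refine (injective_iff_map_eq_zero T).mpr fun y hy => ?_
    refine eq_zero_of_forall_ne_facetSlack_zero_eq_zero hbdd p fun q hq => ?_
    simpa [facetSlack, hT] using congrFun hy ⟨q, hq⟩
  have hdim : Module.finrank ℝ (ι → ℝ) = Module.finrank ℝ ({q // q ≠ p} → ℝ) := by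
    simp [hcard]
  obtain ⟨y, hy⟩ := (LinearMap.injective_iff_surjective_of_finrank_eq_finrank hdim).mp hinj
    fun q => h - c q
  refine ⟨y, fun q hq => ?_⟩
  have hyq : ∑ j, s j q * y j = h - c q := congrFun hy ⟨q, hq⟩
  simp [facetSlack, hyq]

variable [Fintype m] [DecidableEq m] {X : ι → Matrix m m ℂ} {p : d}

theorem facetSlack_eq_zero_of_posDef_of_ne (hcard : Fintype.card d = Fintype.card ι + 1)
    (hbdd : BoundedD (polytopePencil s))
    (hX : X ∈ Set.extremePoints ℝ {Y : ι → Matrix m m ℂ | memD (polytopePencil s) Y})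
    (hp : (facetSlack s 1 X p).PosDef) {q : d} (hq : q ≠ p) : facetSlack s 1 X q = 0 := by
  obtain ⟨hXh, hXpsd⟩ := memD_polytopePencil_iff.mp hX.1
  obtain ⟨y, hy⟩ := exists_forall_ne_facetSlack_eq hcard hbdd p 0 (Pi.single q 1)
  let Y (j : ι) : Matrix m m ℂ := y j • facetSlack s 1 X q
  have hYslack (r : d) : facetSlack s 0 Y r = facetSlack s 0 y r • facetSlack s 1 X q := by
    simpa only [zero_smul] using facetSlack_smul_const s 0 y (facetSlack s 1 X q) r
  have hYh (j : ι) : (Y j).IsHermitian := (hXpsd q).isHermitian.smul (.all _)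
  have hpsd (r : d) :
      ∀ᶠ t : ℝ in 𝓝 0, (facetSlack s 1 X r + t • facetSlack s 0 Y r).PosSemidef := by
    by_cases hrp : r = p
    · subst hrp
      exact eventually_posSemidef_add_smul hp (isHermitian_facetSlack s isHermitian_zero hYh r)
    rw [hYslack, hy r hrp]
    obtain rfl | hrq := eq_or_ne r q
    · filter_upwards [lt_mem_nhds neg_one_lt_zero] with t ht
      have hcomb : facetSlack s 1 X r + t • facetSlack s 1 X r =
          (1 + t) • facetSlack s 1 X r := by module
      rw [Pi.single_eq_same, one_smul, hcomb]
      exact (hXpsd r).smul (by linarith)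
    · simpa [hrq] using hXpsd r
  have hY : Y = 0 := eq_zero_of_mem_extremePoints_of_eventually_add_smul_mem hX
    (eventually_memD_add_smul hXh hYh hpsd)
  calc facetSlack s 1 X q = facetSlack s 0 Y q := by
        rw [hYslack, hy q hq, Pi.single_eq_same, one_smul]
    _ = 0 := by simp [hY, facetSlack]

theorem exists_eq_smul_one_of_posDef_facetSlack (hcard : Fintype.card d = Fintype.card ι + 1)
    (hbdd : BoundedD (polytopePencil s))
    (hX : X ∈ Set.extremePoints ℝ {Y : ι → Matrix m m ℂ | memD (polytopePencil s) Y})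
    (hp : (facetSlack s 1 X p).PosDef) : ∃ c : ι → ℝ, X = fun j => c j • 1 := by
  obtain ⟨c, hc⟩ := exists_forall_ne_facetSlack_eq hcard hbdd p 1 0
  refine ⟨c, sub_eq_zero.mp (eq_zero_of_forall_ne_facetSlack_zero_eq_zero hbdd p fun q hq => ?_)⟩
  have hscalar : facetSlack s 1 (fun j => c j • (1 : Matrix m m ℂ)) q = 0 := by
    simpa [hc q hq] using facetSlack_smul_const s 1 c (1 : Matrix m m ℂ) q
  have hsub := facetSlack_sub s 1 1 X (fun j => c j • (1 : Matrix m m ℂ)) q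
  rw [sub_self, hscalar, sub_zero] at hsub
  exact hsub.trans (facetSlack_eq_zero_of_posDef_of_ne hcard hbdd hX hp hq)

end Simplex

theorem map_im_eq_zero_of_det_facetSlack_eq_zero {ι d : Type*} [Fintype ι] [Fintype d]
    [DecidableEq d] [Nonempty d] {s : ι → d → ℝ} (hbdd : BoundedD (polytopePencil s))
    {X : ι → Matrix (Fin 2) (Fin 2) ℂ} (hX : ∀ j, (X j).map Complex.im = 0)
    (hdet : ∀ p, (facetSlack s 1 X p).det = 0)
    {H : Matrix (Fin 2) (Fin 2) ℂ} {W : ι → Matrix (Fin 2) (Fin 2) ℂ}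
    (hH : H.IsHermitian) (hW : ∀ j, (W j).IsHermitian)
    (hker : ∀ v : d × Fin 2 → ℂ,
      ((1 : Matrix (d × Fin 2) (d × Fin 2) ℂ) - ∑ j, polytopePencil s j ⊗ₖ X j) *ᵥ v = 0 →
        ((1 : Matrix d d ℂ) ⊗ₖ H - ∑ j, polytopePencil s j ⊗ₖ W j) *ᵥ v = 0) :
    H.map Complex.im = 0 := by
  refine eq_zero_of_forall_facetSlack_eq_zero hbdd (w := fun j => (W j).map Complex.im) fun p => ?_
  have hreal : (facetSlack s 1 X p).map Complex.im = 0 := by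
    have hone : (1 : Matrix (Fin 2) (Fin 2) ℂ).map Complex.im = 0 := by
      ext a b
      simp [one_apply, apply_ite Complex.im]
    rw [map_im_facetSlack, hone]
    simp [hX, facetSlack]
  obtain ⟨w, hw, hXw⟩ := exists_ofReal_mulVec_eq_zero hreal (hdet p)
  rw [← map_im_facetSlack]
  exact map_im_eq_zero_of_isHermitian_of_mulVec_eq_zero (isHermitian_facetSlack s hH hW p) hw
    (facetSlack_mulVec_eq_zero_of_forall_mulVec_eq_zero hker hXw)

/-- Let `D_S` be a bounded free simplex and `X ∈ D_S(2)` a tuple of real symmetric 2×2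
matrices that is a Euclidean extreme point of `D_S(2)` such that some `X_j` is not a real
scalar multiple of `I_2`.  If `(H, W)` is a tuple of 2×2 Hermitian matrices with
`ker L_S(X) ⊆ ker Λ_{(I,−S)}(H, W)`, then all entries of `H` are real. -/
theorem stmt_16 {g : ℕ} (s : Fin g → Fin (g + 1) → ℝ)
    (hbdd : BoundedD (simplexPencil s))
    (X : Fin g → Matrix (Fin 2) (Fin 2) ℂ)
    (hXreal : ∀ j p q, (X j p q).im = 0)
    (hXeuc : X ∈ Set.extremePoints ℝ
      {W : Fin g → Matrix (Fin 2) (Fin 2) ℂ | memD (simplexPencil s) W})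
    (hXns : ∃ j, ¬ ∃ c : ℝ, X j = c • (1 : Matrix (Fin 2) (Fin 2) ℂ))
    (H : Matrix (Fin 2) (Fin 2) ℂ) (W : Fin g → Matrix (Fin 2) (Fin 2) ℂ)
    (hH : H.IsHermitian) (hW : ∀ j, (W j).IsHermitian)
    (hker : ∀ v : Fin (g + 1) × Fin 2 → ℂ,
      ((1 : Matrix (Fin (g + 1) × Fin 2) (Fin (g + 1) × Fin 2) ℂ)
          - ∑ j, simplexPencil s j ⊗ₖ X j).mulVec v = 0 →
        ((1 : Matrix (Fin (g + 1)) (Fin (g + 1)) ℂ) ⊗ₖ H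
          - ∑ j, simplexPencil s j ⊗ₖ W j).mulVec v = 0) :
    ∀ p q, (H p q).im = 0 := by
  have hX : ∀ j, (X j).map Complex.im = 0 := fun j => Matrix.ext (hXreal j)
  have hdet : ∀ p, (facetSlack s 1 X p).det = 0 := by
    by_contra! h
    obtain ⟨p, hp⟩ := h
    have hpos : (facetSlack s 1 X p).PosDef :=
      ((memD_polytopePencil_iff.mp hXeuc.1).2 p).posDef_iff_det_ne_zero.mpr hp
    obtain ⟨c, hc⟩ := exists_eq_smul_one_of_posDef_facetSlack (by simp) hbdd hXeuc hpos
    obtain ⟨j, hj⟩ := hXns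
    exact hj ⟨c j, congrFun hc j⟩
  have him : H.map Complex.im = 0 :=
    map_im_eq_zero_of_det_facetSlack_eq_zero hbdd hX hdet hH hW hker
  exact fun p q => congrFun₂ him p q
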